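/- If K is a convex body in ℝⁿ (n ≥ 2) and z ∈ int K is the Santaló point of K, then |K|·|K^z| ≤ κ_n², where κ_n is the volume of the Euclidean unit ball Bⁿ. -/

import Mathlib

open MeasureTheory

noncomputable section

/-- The polar of a set `K ⊆ ℝⁿ` with respect to a point `z`:
`K^z = {x : ⟨x−z, y−z⟩ ≤ 1 for all y ∈ K}`. -/
def polarBody {n : ℕ} (K : Set (EuclideanSpace ℝ (Fin n))) (z : EuclideanSpace ℝ (Fin n)) :
    Set (EuclideanSpace ℝ (Fin n)) :=
  {x | ∀ y ∈ K, (inner ℝ (x - z) (y - z) : ℝ) ≤ 1}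

section Helpers

open Set
open scoped ENNReal Pointwise


theorem bm1_compact {A B : Set ℝ} (hA : IsCompact A) (hB : IsCompact B) (hA0 : A.Nonempty)
    (hB0 : B.Nonempty) : volume A + volume B ≤ volume (A + B) := by
  obtain ⟨a, haA, ha⟩ := hA.exists_isGreatest hA0
  obtain ⟨b, hbB, hb⟩ := hB.exists_isLeast hB0
  have h1 : (fun x => x + b) '' A ⊆ A + B := by
    rintro _ ⟨x, hx, rfl⟩; exact add_mem_add hx hbB
  have h2 : (fun x => a + x) '' B ⊆ A + B := by
    rintro _ ⟨x, hx, rfl⟩; exact add_mem_add haA hx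
  have hv1 : volume ((fun x => x + b) '' A) = volume A := by simp
  have hv2 : volume ((fun x => a + x) '' B) = volume B := by simp
  have hm : MeasurableSet ((fun x => a + x) '' B) :=
    (hB.image (by fun_prop)).isClosed.measurableSet
  have hd : AEDisjoint volume ((fun x => x + b) '' A) ((fun x => a + x) '' B) := by
    refine measure_mono_null (t := {a + b}) ?_ (by simp)
    rintro _ ⟨⟨x, hx, rfl⟩, ⟨y, hy, hxy⟩⟩
    have := ha hx
    have := hb hy
    simp only [mem_singleton_iff]
    simp only at hxy
    linarith
  calc volume A + volume B = _ := by rw [← hv1, ← hv2, ← measure_union₀ hm.nullMeasurableSet hd]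
    _ ≤ _ := measure_mono (union_subset h1 h2)

theorem bm1 {A B D : Set ℝ} (hA : MeasurableSet A) (hB : MeasurableSet B) (hA0 : A.Nonempty)
    (hB0 : B.Nonempty) (hD : ∀ a ∈ A, ∀ b ∈ B, (a + b) / 2 ∈ D) :
    volume A + volume B ≤ 2 * volume D := by
  obtain ⟨a0, ha0⟩ := hA0
  obtain ⟨b0, hb0⟩ := hB0
  have key : ∀ A' ⊆ A, ∀ B' ⊆ B, IsCompact A' → IsCompact B' →
      volume A' + volume B' ≤ 2 * volume D := by
    intro A' hA' B' hB' hcA hcB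
    have h := bm1_compact (hcA.insert a0) (hcB.insert b0) (by simp) (by simp)
    have hsub : insert a0 A' + insert b0 B' ⊆ (2 : ℝ) • D := by
      rintro _ ⟨x, hx, y, hy, rfl⟩
      have hx' : x ∈ A := by
        rcases hx with rfl | hx
        · exact ha0
        · exact hA' hx
      have hy' : y ∈ B := by
        rcases hy with rfl | hy
        · exact hb0
        · exact hB' hy
      exact ⟨(x + y) / 2, hD x hx' y hy', by simp; ring⟩
    calc volume A' + volume B' ≤ volume (insert a0 A') + volume (insert b0 B') :=
          add_le_add (measure_mono (subset_insert _ _)) (measure_mono (subset_insert _ _))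
      _ ≤ _ := h
      _ ≤ volume ((2 : ℝ) • D) := measure_mono hsub
      _ = _ := by rw [Measure.addHaar_smul]; simp
  rw [hA.measure_eq_iSup_isCompact, hB.measure_eq_iSup_isCompact]
  simp_rw [iSup_and']
  exact ENNReal.biSup_add_biSup_le' ⟨∅, by simp⟩ ⟨∅, by simp⟩
    fun A' hA' B' hB' => key A' hA'.1 B' hB'.1 hA'.2 hB'.2

theorem pl0 {φ ψ χ : ℝ → ℝ} (hφ : Measurable φ) (hψ : Measurable ψ) (hχ : Measurable χ)
    (hφ0 : ∀ p, 0 ≤ φ p) (hψ0 : ∀ p, 0 ≤ ψ p) (hχ0 : ∀ p, 0 ≤ χ p)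
    (hφ1 : ∀ p, φ p ≤ 1) (hψ1 : ∀ p, ψ p ≤ 1)
    (hφs : ∀ t < 1, ∃ p, t < φ p) (hψs : ∀ t < 1, ∃ p, t < ψ p)
    (h : ∀ p q, φ p * ψ q ≤ χ ((p + q) / 2) ^ 2) :
    (∫⁻ p, ENNReal.ofReal (φ p)) + (∫⁻ p, ENNReal.ofReal (ψ p)) ≤
      2 * ∫⁻ p, ENNReal.ofReal (χ p) := by
  rw [lintegral_eq_lintegral_meas_lt _ (.of_forall hφ0) hφ.aemeasurable,
    lintegral_eq_lintegral_meas_lt _ (.of_forall hψ0) hψ.aemeasurable,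
    lintegral_eq_lintegral_meas_lt _ (.of_forall hχ0) hχ.aemeasurable]
  have anti : ∀ f : ℝ → ℝ, Antitone fun t : ℝ => volume {a | t < f a} :=
    fun f s t hst => measure_mono fun a (ha : t < f a) => lt_of_le_of_lt hst ha
  rw [← lintegral_add_left (anti φ).measurable, ← lintegral_const_mul _ (anti χ).measurable]
  refine setLIntegral_mono' measurableSet_Ioi fun t ht => ?_
  rcases lt_or_ge t 1 with h1 | h1
  · refine bm1 (measurableSet_lt measurable_const hφ) (measurableSet_lt measurable_const hψ)
      (hφs t h1) (hψs t h1) fun a ha b hb => ?_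
    simp only [mem_ofPred_eq] at ha hb ⊢
    have ht' : 0 < t := ht
    refine lt_of_pow_lt_pow_left₀ 2 (hχ0 _) (lt_of_lt_of_le ?_ (h a b))
    nlinarith
  · have e1 : {a | t < φ a} = ∅ := by
      ext a; simpa using (hφ1 a).trans h1
    have e2 : {a | t < ψ a} = ∅ := by
      ext a; simpa using (hψ1 a).trans h1
    simp [e1, e2]

theorem amgm_enn {x y z : ℝ≥0∞} (h : x + y ≤ 2 * z) : x * y ≤ z ^ 2 := by
  rcases eq_or_ne z ∞ with rfl | hz
  · simp
  have h2 : x + y ≠ ∞ := ne_top_of_le_ne_top (ENNReal.mul_ne_top (by simp) hz) h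
  have hx : x ≠ ∞ := fun e => h2 (by simp [e])
  have hy : y ≠ ∞ := fun e => h2 (by simp [e])
  lift x to NNReal using hx
  lift y to NNReal using hy
  lift z to NNReal using hz
  norm_cast at h ⊢
  have h' : (x : ℝ) + y ≤ 2 * z := by exact_mod_cast h
  have : (x : ℝ) * y ≤ z ^ 2 := by
    have hx := x.2
    have hy := y.2
    nlinarith [sq_nonneg ((x : ℝ) - y), x.coe_nonneg, y.coe_nonneg, z.coe_nonneg]
  exact_mod_cast this

theorem pl_bdd {φ ψ χ : ℝ → ℝ} (hφ : Measurable φ) (hψ : Measurable ψ) (hχ : Measurable χ)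
    (hφ0 : ∀ p, 0 ≤ φ p) (hψ0 : ∀ p, 0 ≤ ψ p) (hχ0 : ∀ p, 0 ≤ χ p)
    (N : ℝ) (hφ1 : ∀ p, φ p ≤ N) (hψ1 : ∀ p, ψ p ≤ N)
    (h : ∀ p q, φ p * ψ q ≤ χ ((p + q) / 2) ^ 2) :
    (∫⁻ p, ENNReal.ofReal (φ p)) * (∫⁻ p, ENNReal.ofReal (ψ p)) ≤
      (∫⁻ p, ENNReal.ofReal (χ p)) ^ 2 := by
  have bφ : BddAbove (range φ) := ⟨N, by rintro _ ⟨p, rfl⟩; exact hφ1 p⟩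
  have bψ : BddAbove (range ψ) := ⟨N, by rintro _ ⟨p, rfl⟩; exact hψ1 p⟩
  set α := ⨆ p, φ p with hα
  set β := ⨆ p, ψ p with hβ
  have leα : ∀ p, φ p ≤ α := le_ciSup bφ
  have leβ : ∀ p, ψ p ≤ β := le_ciSup bψ
  rcases (Real.iSup_nonneg hφ0 : 0 ≤ α).eq_or_lt with h0 | hα0
  · have : ∀ p, φ p = 0 := fun p => le_antisymm (h0 ▸ leα p) (hφ0 p)
    simp [this]
  rcases (Real.iSup_nonneg hψ0 : 0 ≤ β).eq_or_lt with h0 | hβ0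
  · have : ∀ p, ψ p = 0 := fun p => le_antisymm (h0 ▸ leβ p) (hψ0 p)
    simp [this]
  have hγ0 : 0 < √(α * β) := Real.sqrt_pos.2 (by positivity)
  have hγ2 : √(α * β) ^ 2 = α * β := Real.sq_sqrt (by positivity)
  set γ := √(α * β)
  have key := pl0 (φ := fun p => α⁻¹ * φ p) (ψ := fun p => β⁻¹ * ψ p) (χ := fun p => γ⁻¹ * χ p)
    (by fun_prop) (by fun_prop) (by fun_prop) (fun p => by have := hφ0 p; positivity)
    (fun p => by have := hψ0 p; positivity) (fun p => by have := hχ0 p; positivity)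
    (fun p => by rw [inv_mul_le_one₀ hα0]; exact leα p)
    (fun p => by rw [inv_mul_le_one₀ hβ0]; exact leβ p)
    (fun t ht => by
      obtain ⟨p, hp⟩ := exists_lt_of_lt_ciSup (show t * α < ⨆ p, φ p by rw [← hα]; nlinarith)
      exact ⟨p, by rw [lt_inv_mul_iff₀ hα0]; linarith⟩)
    (fun t ht => by
      obtain ⟨p, hp⟩ := exists_lt_of_lt_ciSup (show t * β < ⨆ p, ψ p by rw [← hβ]; nlinarith)
      exact ⟨p, by rw [lt_inv_mul_iff₀ hβ0]; linarith⟩)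
    (fun p q => by
      have := h p q
      calc α⁻¹ * φ p * (β⁻¹ * ψ q) = (α * β)⁻¹ * (φ p * ψ q) := by field_simp
        _ ≤ (α * β)⁻¹ * χ ((p + q) / 2) ^ 2 := by gcongr
        _ = _ := by rw [← hγ2, mul_pow, inv_pow])
  have e : ∀ (c : ℝ) (f : ℝ → ℝ), 0 < c → Measurable f →
      ∫⁻ p, ENNReal.ofReal (c⁻¹ * f p) = (ENNReal.ofReal c)⁻¹ * ∫⁻ p, ENNReal.ofReal (f p) := by
    intro c f hc hf
    rw [← ENNReal.ofReal_inv_of_pos hc, ← lintegral_const_mul _ (by fun_prop)]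
    congr with p
    rw [ENNReal.ofReal_mul (by positivity)]
  rw [e _ _ hα0 hφ, e _ _ hβ0 hψ, e _ _ hγ0 hχ] at key
  have k2 := amgm_enn key
  have hα' : ENNReal.ofReal α ≠ 0 := by simpa using hα0
  have hβ' : ENNReal.ofReal β ≠ 0 := by simpa using hβ0
  have hγ' : ENNReal.ofReal γ ≠ 0 := by simpa using hγ0
  set I := ∫⁻ p, ENNReal.ofReal (φ p)
  set J := ∫⁻ p, ENNReal.ofReal (ψ p)
  set L := ∫⁻ p, ENNReal.ofReal (χ p)
  have hab : ENNReal.ofReal α * ENNReal.ofReal β = ENNReal.ofReal γ ^ 2 := by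
    rw [← ENNReal.ofReal_mul hα0.le, ← ENNReal.ofReal_pow hγ0.le, hγ2]
  calc I * J = (ENNReal.ofReal α * (ENNReal.ofReal α)⁻¹) * (ENNReal.ofReal β * (ENNReal.ofReal β)⁻¹) * (I * J) := by
        rw [ENNReal.mul_inv_cancel hα' (by simp), ENNReal.mul_inv_cancel hβ' (by simp)]; simp
    _ = (ENNReal.ofReal α * ENNReal.ofReal β) * ((ENNReal.ofReal α)⁻¹ * I * ((ENNReal.ofReal β)⁻¹ * J)) := by ring
    _ ≤ (ENNReal.ofReal γ ^ 2) * ((ENNReal.ofReal γ)⁻¹ * L) ^ 2 := by rw [hab]; gcongr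
    _ = (ENNReal.ofReal γ * (ENNReal.ofReal γ)⁻¹) ^ 2 * L ^ 2 := by ring
    _ = L ^ 2 := by rw [ENNReal.mul_inv_cancel hγ' (by simp)]; simp

theorem trunc_le {α : Type*} [MeasurableSpace α] {μ : Measure α} {f : α → ℝ≥0∞} {F : ℕ → α → ℝ≥0∞}
    {I J : ℝ≥0∞} (hF : ∀ N, Measurable (F N)) (hmono : Monotone F) (hsup : ∀ x, f x ≤ ⨆ N, F N x)
    (h : ∀ N, (∫⁻ x, F N x ∂μ) * I ≤ J) : (∫⁻ x, f x ∂μ) * I ≤ J := by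
  calc (∫⁻ x, f x ∂μ) * I ≤ (∫⁻ x, ⨆ N, F N x ∂μ) * I := by gcongr; exact hsup _
    _ = ⨆ N, (∫⁻ x, F N x ∂μ) * I := by rw [lintegral_iSup hF hmono, ENNReal.iSup_mul]
    _ ≤ J := iSup_le h

theorem le_iSup_min (a : ℝ≥0∞) : a ≤ ⨆ N : ℕ, min a N := by
  have : ⨆ N : ℕ, a ⊓ (N : ℝ≥0∞) = a := by rw [← inf_iSup_eq, ENNReal.iSup_natCast]; simp
  exact this.ge

theorem pl_enn {φ ψ : ℝ → ℝ≥0∞} {χ : ℝ → ℝ} (hφ : Measurable φ) (hψ : Measurable ψ)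
    (hχ : Measurable χ) (hχ0 : ∀ p, 0 ≤ χ p)
    (h : ∀ p q, φ p * ψ q ≤ ENNReal.ofReal (χ ((p + q) / 2) ^ 2)) :
    (∫⁻ p, φ p) * (∫⁻ p, ψ p) ≤ (∫⁻ p, ENNReal.ofReal (χ p)) ^ 2 := by
  have mono : ∀ f : ℝ → ℝ≥0∞, Monotone fun (N : ℕ) p => min (f p) (N : ℝ≥0∞) := by
    intro f M N hMN p
    exact min_le_min le_rfl (by exact_mod_cast hMN)
  refine trunc_le (F := fun N p => min (φ p) N) (fun N => by fun_prop) (mono φ)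
    (fun x => le_iSup_min _) fun N => ?_
  rw [mul_comm]
  refine trunc_le (F := fun N p => min (ψ p) N) (fun N => by fun_prop) (mono ψ)
    (fun x => le_iSup_min _) fun M => ?_
  have fin : ∀ (a : ℝ≥0∞) (N : ℕ), min a N ≠ ∞ := fun a N =>
    ne_top_of_le_ne_top (ENNReal.natCast_ne_top N) (min_le_right _ _)
  have bd : ∀ (a : ℝ≥0∞) (N : ℕ), (min a N).toReal ≤ N := fun a N => by
    simpa using ENNReal.toReal_mono (ENNReal.natCast_ne_top N) (min_le_right a N)
  have := pl_bdd (φ := fun p => (min (φ p) N).toReal) (ψ := fun p => (min (ψ p) M).toReal)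
    (χ := χ) (by fun_prop) (by fun_prop) hχ (by simp) (by simp) hχ0 (max N M)
    (fun p => (bd _ _).trans (le_max_left _ _)) (fun p => (bd _ _).trans (le_max_right _ _))
    (fun p q => by
      rw [← ENNReal.toReal_mul]
      refine ENNReal.toReal_le_of_le_ofReal (by positivity) (le_trans ?_ (h p q))
      exact mul_le_mul' (min_le_left _ _) (min_le_left _ _))
  simp only [ENNReal.ofReal_toReal (fin _ _)] at this
  rwa [mul_comm]

theorem exp_change (f : ℝ → ℝ≥0∞) :
    ∫⁻ s in Ioi (0 : ℝ), f s = ∫⁻ p : ℝ, ENNReal.ofReal (Real.exp p) * f (Real.exp p) := by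
  have := lintegral_image_eq_lintegral_abs_deriv_mul (s := univ) (f := Real.exp) (f' := Real.exp)
    MeasurableSet.univ (fun x _ => (Real.hasDerivAt_exp x).hasDerivWithinAt)
    Real.exp_injective.injOn f
  simpa [Real.range_exp, abs_of_pos (Real.exp_pos _)] using this

theorem santalo_one {f g : ℝ → ℝ≥0∞} (hf : Measurable f) (hg : Measurable g) (C : NNReal)
    (h : ∀ s t, 0 < s → 0 < t → f s * g t ≤ C * ENNReal.ofReal (Real.exp (-(s * t)))) :
    (∫⁻ s in Ioi (0 : ℝ), f s) * (∫⁻ s in Ioi (0 : ℝ), g s) ≤ C * ENNReal.ofReal (Real.pi / 2) := by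
  rw [exp_change, exp_change g]
  have e1 : ∀ r : ℝ, ENNReal.ofReal (Real.exp r * (√C * Real.exp (-(1 / 2) * Real.exp r ^ 2))) =
    ENNReal.ofReal (Real.exp r) * ENNReal.ofReal (√C * Real.exp (-(1 / 2) * Real.exp r ^ 2)) :=
    fun r => ENNReal.ofReal_mul (Real.exp_pos _).le
  refine (pl_enn (χ := fun r => Real.exp r * (√C * Real.exp (-(1 / 2) * Real.exp r ^ 2)))
    (by fun_prop) (by fun_prop) (by fun_prop) (fun p => by positivity) ?_).trans (le_of_eq ?_)
  · intro p q
    have := h _ _ (Real.exp_pos p) (Real.exp_pos q)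
    calc _ = ENNReal.ofReal (Real.exp p) * ENNReal.ofReal (Real.exp q) * (f (Real.exp p) * g (Real.exp q)) := by ring
      _ ≤ ENNReal.ofReal (Real.exp p) * ENNReal.ofReal (Real.exp q) * (C * ENNReal.ofReal (Real.exp (-(Real.exp p * Real.exp q)))) := by gcongr
      _ = _ := by
        rw [← ENNReal.ofReal_mul (Real.exp_pos _).le, ← ENNReal.ofReal_coe_nnreal,
          ← ENNReal.ofReal_mul (by positivity), ← ENNReal.ofReal_mul (by positivity)]
        congr 1
        have e2 : Real.exp ((p + q) / 2) ^ 2 = Real.exp p * Real.exp q := by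
          rw [← Real.exp_nat_mul, ← Real.exp_add]; congr 1; push_cast; ring
        rw [mul_pow, mul_pow, e2, Real.sq_sqrt C.coe_nonneg, ← Real.exp_nat_mul]
        congr 3
        push_cast; ring
  · simp_rw [e1]
    rw [← exp_change fun s => ENNReal.ofReal (√C * Real.exp (-(1 / 2) * s ^ 2))]
    rw [← ofReal_integral_eq_lintegral_ofReal, integral_const_mul, integral_gaussian_Ioi,
      ← ENNReal.ofReal_pow (by positivity), ← ENNReal.ofReal_coe_nnreal,
      ← ENNReal.ofReal_mul (by positivity)]
    · congr 1
      rw [mul_pow, div_pow, Real.sq_sqrt C.coe_nonneg, Real.sq_sqrt (by positivity)]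
      field_simp
    · exact ((integrable_exp_neg_mul_sq (by norm_num)).const_mul _).integrableOn
    · exact .of_forall fun x => by positivity


theorem median (ρ : Measure ℝ) [IsFiniteMeasure ρ] [NullSingletonClass ρ] (M : ℝ) (hM : 0 ≤ M)
    (h : ρ (Ioc (-M) M)ᶜ = 0) :
    ∃ a, ρ.real (Iio a) = ρ.real univ / 2 ∧ ρ.real (Ioi a) = ρ.real univ / 2 := by
  have hc : Continuous fun b => ∫ x in (-M)..b, (1 : ℝ) ∂ρ :=
    intervalIntegral.continuous_primitive (fun a b => intervalIntegrable_const) _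
  have htot : ρ.real (Ioc (-M) M) = ρ.real univ := by
    rw [← measureReal_add_measureReal_compl (μ := ρ) (s := Ioc (-M) M) measurableSet_Ioc,
      measureReal_def ρ (Ioc (-M) M)ᶜ, h]
    simp
  have e : ∀ b, -M ≤ b → ∫ x in (-M)..b, (1 : ℝ) ∂ρ = ρ.real (Ioc (-M) b) := by
    intro b hb
    rw [intervalIntegral.integral_of_le hb]; simp
  have hMM : -M ≤ M := by linarith
  obtain ⟨b, hb, hb2⟩ := intermediate_value_Icc hMM hc.continuousOn
    (show ρ.real univ / 2 ∈ Icc _ _ by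
      rw [e _ le_rfl, e _ hMM, htot]
      have : 0 ≤ ρ.real univ := measureReal_nonneg
      simp only [Ioc_self, measureReal_empty, mem_Icc]
      constructor <;> linarith)
  simp only at hb2
  rw [e b hb.1] at hb2
  have hIic : ρ.real (Iic b) = ρ.real univ / 2 := by
    rw [← hb2]
    apply measureReal_congr
    have h0 : ∀ᵐ x ∂ρ, x ∈ Ioc (-M) M := h
    filter_upwards [h0] with x hx
    simp only [eq_iff_iff]
    exact ⟨fun hxb => ⟨hx.1, hxb⟩, fun hxb => hxb.2⟩
  refine ⟨b, ?_, ?_⟩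
  · rw [← hIic]; exact measureReal_congr Iio_ae_eq_Iic
  · have := measureReal_add_measureReal_compl (μ := ρ) (s := Iic b) measurableSet_Iic
    rw [compl_Iic] at this
    linarith

def FSan (n : ℕ) : Prop := ∀ (C : NNReal) (f g : (Fin n → ℝ) → ℝ≥0∞), Measurable f → Measurable g →
  (∫⁻ y, g y ≠ ∞) → (∀ i, Integrable (fun y : Fin n → ℝ => y i) (volume.withDensity g)) →
  (∀ i, ∫ y, y i ∂(volume.withDensity g) = 0) →
  (∀ x y, f x * g y ≤ C * ENNReal.ofReal (Real.exp (-(x ⬝ᵥ y)))) →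
  (∫⁻ x, f x) * (∫⁻ y, g y) ≤ C * ENNReal.ofReal (2 * Real.pi) ^ n

theorem FSan_zero : FSan 0 := by
  intro C f g hf hg _ _ _ h
  have e : ∀ k : (Fin 0 → ℝ) → ℝ≥0∞, ∫⁻ x, k x = k 0 := by
    intro k
    have : ∀ x, k x = k 0 := fun x => congrArg k (Subsingleton.elim _ _)
    rw [lintegral_congr this, lintegral_const]
    simp [volume_pi]
  have h1 := h 0 0
  rw [zero_dotProduct] at h1
  rw [e, e]
  simpa using h1

theorem half_line {σ : ℝ} (hσ : σ = 1 ∨ σ = -1) (a : ℝ) (k : ℝ → ℝ≥0∞) (hk : Measurable k) :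
    ∫⁻ s in Ioi (0 : ℝ), k (a + σ * s) = ∫⁻ r in {r | 0 < σ * (r - a)}, k r := by
  have hm : MeasurableSet {r : ℝ | 0 < σ * (r - a)} := measurableSet_lt (by fun_prop) (by fun_prop)
  have hmp : MeasurePreserving (fun s : ℝ => a + σ * s) := by
    rcases hσ with rfl | rfl
    · simpa using measurePreserving_add_left volume a
    · simpa [Function.comp_def] using (measurePreserving_add_left volume a).comp (Measure.measurePreserving_neg volume)
  have : (fun s : ℝ => a + σ * s) ⁻¹' {r : ℝ | 0 < σ * (r - a)} = Ioi 0 := by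
    ext s
    rcases hσ with rfl | rfl <;> simp
  rw [← this, hmp.setLIntegral_comp_preimage hm hk]

theorem half {n : ℕ} (hP : FSan n) (C : NNReal) (f g : ℝ × (Fin n → ℝ) → ℝ≥0∞) (hf : Measurable f)
    (hg : Measurable g) (σ : ℝ) (hσ : σ = 1 ∨ σ = -1) (z w : Fin n → ℝ) (a : ℝ)
    (μ : Measure (ℝ × (Fin n → ℝ)))
    (hμ : μ = (volume.withDensity f).restrict {x | 0 < σ * (x.1 - a)})
    (hfin : μ univ ≠ ∞)
    (hintg : ∀ i, Integrable (fun x => x.2 i - z i - (x.1 - a) * w i) μ)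
    (h0 : ∀ i, ∫ x, (x.2 i - z i - (x.1 - a) * w i) ∂μ = 0)
    (h : ∀ x y, f x * g y ≤ C * ENNReal.ofReal (Real.exp (-(x.1 * y.1 + x.2 ⬝ᵥ y.2)))) :
    μ univ * (∫⁻ y in {y | 0 < σ * (y.1 + w ⬝ᵥ y.2)},
      g y * ENNReal.ofReal (Real.exp (a * y.1 + z ⬝ᵥ y.2))) ≤
      C * ENNReal.ofReal (Real.pi / 2) * ENNReal.ofReal (2 * Real.pi) ^ n := by
  have hdot : ∀ v : Fin n → ℝ, Measurable fun y : Fin n → ℝ => v ⬝ᵥ y := fun v => by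
    unfold dotProduct; fun_prop
  have hdot2 : Measurable fun y : ℝ × (Fin n → ℝ) => w ⬝ᵥ y.2 := (hdot w).comp measurable_snd
  have hdot3 : Measurable fun y : ℝ × (Fin n → ℝ) => z ⬝ᵥ y.2 := (hdot z).comp measurable_snd
  have hmS : MeasurableSet {x : ℝ × (Fin n → ℝ) | 0 < σ * (x.1 - a)} :=
    measurableSet_lt (by fun_prop) (by fun_prop)
  have hmS2 : MeasurableSet {y : ℝ × (Fin n → ℝ) | 0 < σ * (y.1 + w ⬝ᵥ y.2)} :=
    measurableSet_lt (by fun_prop) (by fun_prop)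
  set g' : ℝ × (Fin n → ℝ) → ℝ≥0∞ :=
    fun y => g y * ENNReal.ofReal (Real.exp (a * y.1 + z ⬝ᵥ y.2)) with hg'
  have hg'm : Measurable g' := by fun_prop
  let F : (Fin n → ℝ) → ℝ≥0∞ := fun y => ∫⁻ s in Ioi (0 : ℝ), f (a + σ * s, y + z + (σ * s) • w)
  let G : (Fin n → ℝ) → ℝ≥0∞ := fun y => ∫⁻ t in Ioi (0 : ℝ), g' (-(w ⬝ᵥ y) + σ * t, y)
  have hFm : Measurable F := by
    refine Measurable.lintegral_prod_right' (f := fun p : (Fin n → ℝ) × ℝ =>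
      f (a + σ * p.2, p.1 + z + (σ * p.2) • w)) ?_
    fun_prop
  have hGm : Measurable G := by
    refine Measurable.lintegral_prod_right' (f := fun p : (Fin n → ℝ) × ℝ =>
      g' (-(w ⬝ᵥ p.1) + σ * p.2, p.1)) ?_
    have : Measurable fun p : (Fin n → ℝ) × ℝ => w ⬝ᵥ p.1 := (hdot w).comp measurable_fst
    fun_prop
  have hFG : ∀ x y, G x * F y ≤
      ((C * (Real.pi / 2).toNNReal : NNReal) : ℝ≥0∞) * ENNReal.ofReal (Real.exp (-(x ⬝ᵥ y))) := by
    intro x y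
    have := santalo_one (f := fun t => g' (-(w ⬝ᵥ x) + σ * t, x))
      (g := fun s => f (a + σ * s, y + z + (σ * s) • w)) (by fun_prop) (by fun_prop)
      (C * (Real.exp (-(x ⬝ᵥ y))).toNNReal) ?_
    · refine this.trans (le_of_eq ?_)
      push_cast
      simp only [ENNReal.ofReal]
      ring
    · intro t s ht hs
      have := h (a + σ * s, y + z + (σ * s) • w) (-(w ⬝ᵥ x) + σ * t, x)
      simp only [hg']
      calc _ = (f (a + σ * s, y + z + (σ * s) • w) * g (-(w ⬝ᵥ x) + σ * t, x)) *
            ENNReal.ofReal (Real.exp (a * (-(w ⬝ᵥ x) + σ * t) + z ⬝ᵥ x)) := by ring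
        _ ≤ _ := mul_le_mul_left this _
        _ = _ := by
          push_cast
          rw [mul_assoc, mul_assoc, ← ENNReal.ofReal_mul (by positivity)]
          change _ = (C : ℝ≥0∞) * (ENNReal.ofReal _ * _)
          rw [← ENNReal.ofReal_mul (by positivity), ← Real.exp_add, ← Real.exp_add]
          congr 3
          have hσ2 : σ * σ = 1 := by rcases hσ with rfl | rfl <;> norm_num
          simp only [add_dotProduct, smul_dotProduct, smul_eq_mul]
          rw [dotProduct_comm x y]
          linear_combination (-(s * t)) * hσ2
  have hmap : volume.withDensity F = μ.map (fun x => x.2 - z - (x.1 - a) • w) := by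
    ext A hA
    have hT : Measurable fun x : ℝ × (Fin n → ℝ) => x.2 - z - (x.1 - a) • w := by fun_prop
    rw [Measure.map_apply hT hA, hμ, Measure.restrict_apply (hT hA),
      withDensity_apply _ hA, withDensity_apply _ ((hT hA).inter hmS), ← lintegral_indicator hA,
      ← lintegral_indicator ((hT hA).inter hmS), Measure.volume_eq_prod,
      lintegral_prod _ ((hf.indicator ((hT hA).inter hmS)).aemeasurable)]
    have e1 : ∀ y, A.indicator F y =
        ∫⁻ s in Ioi (0 : ℝ), A.indicator (fun y => f (a + σ * s, y + z + (σ * s) • w)) y := by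
      intro y
      by_cases hy : y ∈ A <;> simp [hy, F]
    simp_rw [e1]
    rw [lintegral_lintegral_swap]
    swap
    · refine Measurable.aemeasurable ?_
      have : Measurable ((Prod.fst ⁻¹' A).indicator
        (fun p : (Fin n → ℝ) × ℝ => f (a + σ * p.2, p.1 + z + (σ * p.2) • w))) :=
        Measurable.indicator (by fun_prop) (measurable_fst hA)
      exact this
    have e2 : ∀ s : ℝ, ∫⁻ y, A.indicator (fun y => f (a + σ * s, y + z + (σ * s) • w)) y =
        (fun r => ∫⁻ x, A.indicator (fun _ => f (r, x)) (x - z - (r - a) • w)) (a + σ * s) := by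
      intro s
      simp only
      rw [← lintegral_add_right_eq_self (fun x => A.indicator (fun _ => f (a + σ * s, x))
        (x - z - (a + σ * s - a) • w)) (z + (σ * s) • w)]
      refine lintegral_congr fun y => ?_
      have : y + (z + (σ * s) • w) - z - (a + σ * s - a) • w = y := by
        rw [add_sub_cancel_left]; abel
      rw [this]
      simp [indicator, add_assoc]
    rw [lintegral_congr e2, half_line hσ a
      (fun r => ∫⁻ x, A.indicator (fun _ => f (r, x)) (x - z - (r - a) • w))]
    · rw [← lintegral_indicator (measurableSet_lt (by fun_prop) (by fun_prop))]
      refine lintegral_congr fun r => ?_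
      by_cases hr : 0 < σ * (r - a)
      · rw [indicator_of_mem (show r ∈ {r | 0 < σ * (r - a)} from hr)]
        refine lintegral_congr fun x => ?_
        by_cases hx : x - z - (r - a) • w ∈ A
        · rw [indicator_of_mem hx, indicator_of_mem
            (show (r, x) ∈ (fun x : ℝ × (Fin n → ℝ) => x.2 - z - (x.1 - a) • w) ⁻¹' A ∩
              {x | 0 < σ * (x.1 - a)} from ⟨hx, hr⟩)]
        · rw [indicator_of_notMem hx, indicator_of_notMem (fun h => hx h.1)]
      · rw [indicator_of_notMem (show r ∉ {r | 0 < σ * (r - a)} from hr)]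
        symm
        rw [lintegral_congr (g := fun _ => 0) fun x => indicator_of_notMem (fun h => hr h.2) _]
        simp
    · refine Measurable.lintegral_prod_right' (f := fun p : ℝ × (Fin n → ℝ) =>
        A.indicator (fun _ => f (p.1, p.2)) (p.2 - z - (p.1 - a) • w)) ?_
      have : Measurable (((fun x : ℝ × (Fin n → ℝ) => x.2 - z - (x.1 - a) • w) ⁻¹' A).indicator f) :=
        hf.indicator (hT hA)
      exact this
  have hT : Measurable fun x : ℝ × (Fin n → ℝ) => x.2 - z - (x.1 - a) • w := by fun_prop
  have hF1 : ∫⁻ y, F y = μ univ := by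
    rw [← setLIntegral_univ, ← withDensity_apply _ MeasurableSet.univ, hmap,
      Measure.map_apply hT MeasurableSet.univ, preimage_univ]
  have hG1 : ∫⁻ y, G y = ∫⁻ y in {y | 0 < σ * (y.1 + w ⬝ᵥ y.2)}, g' y := by
    rw [← lintegral_indicator hmS2, Measure.volume_eq_prod,
      lintegral_prod_symm' _ (hg'm.indicator hmS2)]
    refine lintegral_congr fun y => ?_
    simp only [G]
    rw [half_line hσ (-(w ⬝ᵥ y)) (fun r => g' (r, y)) (by fun_prop),
      ← lintegral_indicator (measurableSet_lt (by fun_prop) (by fun_prop))]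
    refine lintegral_congr fun r => ?_
    simp [indicator]
  have := hP _ G F hGm hFm (by rwa [hF1])
    (fun i => by
      rw [hmap, integrable_map_measure (measurable_pi_apply i).aestronglyMeasurable hT.aemeasurable]
      simpa [Function.comp_def] using hintg i)
    (fun i => by
      rw [hmap, integral_map hT.aemeasurable (measurable_pi_apply i).aestronglyMeasurable]
      simpa using h0 i) hFG
  rw [hF1, hG1, mul_comm] at this
  refine this.trans (le_of_eq ?_)
  push_cast
  rfl


theorem null_graph {n : ℕ} (k : (Fin n → ℝ) → ℝ) (hk : Measurable k) :
    volume {y : ℝ × (Fin n → ℝ) | y.1 + k y.2 = 0} = 0 := by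
  have hm : MeasurableSet {y : ℝ × (Fin n → ℝ) | y.1 + k y.2 = 0} :=
    measurableSet_eq_fun (by fun_prop) (by fun_prop)
  rw [← lintegral_indicator_one hm, Measure.volume_eq_prod,
    lintegral_prod_symm' _ (measurable_one.indicator hm)]
  rw [lintegral_eq_zero_iff (by
    exact Measurable.lintegral_prod_left' (measurable_one.indicator hm))]
  refine .of_forall fun y => ?_
  have : ∀ r, {y : ℝ × (Fin n → ℝ) | y.1 + k y.2 = 0}.indicator (1 : ℝ × (Fin n → ℝ) → ℝ≥0∞) (r, y)
      = ({-k y} : Set ℝ).indicator 1 r := by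
    intro r
    simp [indicator, eq_neg_iff_add_eq_zero]
  beta_reduce
  rw [lintegral_congr this, lintegral_indicator_one (measurableSet_singleton _)]
  simp

theorem step_bdd {n : ℕ} (hP : FSan n) (C : NNReal) (f g : ℝ × (Fin n → ℝ) → ℝ≥0∞)
    (hf : Measurable f) (hg : Measurable g) (N : NNReal) (hfN : ∀ x, f x ≤ N)
    (hfs : ∀ x, x ∉ Metric.closedBall (0 : ℝ × (Fin n → ℝ)) N → f x = 0)
    (hgfin : ∫⁻ y, g y ≠ ∞)
    (hgi1 : Integrable (fun y : ℝ × (Fin n → ℝ) => y.1) (volume.withDensity g))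
    (hgi2 : ∀ i, Integrable (fun y : ℝ × (Fin n → ℝ) => y.2 i) (volume.withDensity g))
    (hg01 : ∫ y, y.1 ∂(volume.withDensity g) = 0)
    (hg02 : ∀ i, ∫ y, y.2 i ∂(volume.withDensity g) = 0)
    (h : ∀ x y, f x * g y ≤ C * ENNReal.ofReal (Real.exp (-(x.1 * y.1 + x.2 ⬝ᵥ y.2)))) :
    (∫⁻ x, f x) * (∫⁻ y, g y) ≤ C * ENNReal.ofReal (2 * Real.pi) ^ (n + 1) := by
  have hdot : ∀ v : Fin n → ℝ, Measurable fun y : Fin n → ℝ => v ⬝ᵥ y := fun v => by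
    unfold dotProduct; fun_prop
  set μ := volume.withDensity f with hμ
  have hμu : μ univ = ∫⁻ x, f x := by rw [hμ, withDensity_apply _ MeasurableSet.univ]; simp
  have hball : ∀ᵐ x ∂μ, x ∈ Metric.closedBall (0 : ℝ × (Fin n → ℝ)) N := by
    rw [hμ, ae_withDensity_iff hf]
    exact .of_forall fun x hx => by_contra fun h' => hx (hfs x h')
  have hμfin : μ univ ≠ ∞ := by
    rw [hμu]
    have : ∀ x, f x ≤ (Metric.closedBall (0 : ℝ × (Fin n → ℝ)) N).indicator (fun _ => (N : ℝ≥0∞)) x := by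
      intro x
      by_cases hx : x ∈ Metric.closedBall (0 : ℝ × (Fin n → ℝ)) N
      · rw [indicator_of_mem hx]; exact hfN x
      · rw [hfs x hx]; simp
    refine ne_top_of_le_ne_top ?_ (lintegral_mono this)
    rw [lintegral_indicator_const Metric.isClosed_closedBall.measurableSet]
    exact ENNReal.mul_ne_top (by simp) measure_closedBall_lt_top.ne
  have : IsFiniteMeasure μ := ⟨hμfin.lt_top⟩
  by_cases hz : μ univ = 0
  · rw [← hμu, hz]; simp
  have hμnull : ∀ a : ℝ, μ {x | x.1 = a} = 0 := by
    intro a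
    refine withDensity_absolutelyContinuous _ _ ?_
    have := null_graph (n := n) (fun _ => -a) measurable_const
    simpa [← sub_eq_add_neg, sub_eq_zero] using this
  have i1 : Integrable (fun x : ℝ × (Fin n → ℝ) => x.1) μ := by
    refine Integrable.of_bound (by fun_prop) N ?_
    filter_upwards [hball] with x hx
    rw [mem_closedBall_zero_iff] at hx
    exact (norm_fst_le x).trans hx
  have i2 : ∀ i, Integrable (fun x : ℝ × (Fin n → ℝ) => x.2 i) μ := by
    intro i
    refine Integrable.of_bound (Measurable.aestronglyMeasurable (by fun_prop)) N ?_
    filter_upwards [hball] with x hx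
    rw [mem_closedBall_zero_iff] at hx
    exact (norm_le_pi_norm x.2 i).trans ((norm_snd_le x).trans hx)
  -- median
  obtain ⟨a, ha1, ha2⟩ : ∃ a, μ.real {x | x.1 < a} = μ.real univ / 2 ∧
      μ.real {x | a < x.1} = μ.real univ / 2 := by
    have : NullSingletonClass (μ.map Prod.fst) := ⟨fun a => by
      rw [Measure.map_apply measurable_fst (measurableSet_singleton a)]
      exact hμnull a⟩
    obtain ⟨a, h1, h2⟩ := median (μ.map Prod.fst) (N + 1) (by positivity) (by
      rw [Measure.map_apply measurable_fst measurableSet_Ioc.compl]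
      refine measure_mono_null ?_ (mem_ae_iff.1 hball)
      intro x hx hx2
      have hx2 : x ∈ Metric.closedBall (0 : ℝ × (Fin n → ℝ)) N := hx2
      rw [mem_closedBall_zero_iff] at hx2
      have := abs_le.1 ((Real.norm_eq_abs _) ▸ (norm_fst_le x).trans hx2)
      exact hx ⟨by linarith, by linarith⟩)
    refine ⟨a, ?_, ?_⟩
    · rw [measureReal_def, measureReal_def, Measure.map_apply measurable_fst measurableSet_Iio,
        Measure.map_apply measurable_fst MeasurableSet.univ] at h1
      exact h1
    · rw [measureReal_def, measureReal_def, Measure.map_apply measurable_fst measurableSet_Ioi,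
        Measure.map_apply measurable_fst MeasurableSet.univ] at h2
      exact h2
  have hm0 : 0 < μ.real univ := ENNReal.toReal_pos hz hμfin
  set m := μ.real univ with hm
  have hSp : MeasurableSet {x : ℝ × (Fin n → ℝ) | 0 < (1 : ℝ) * (x.1 - a)} :=
    measurableSet_lt (by fun_prop) (by fun_prop)
  have hSm : MeasurableSet {x : ℝ × (Fin n → ℝ) | 0 < (-1 : ℝ) * (x.1 - a)} :=
    measurableSet_lt (by fun_prop) (by fun_prop)
  set μp := μ.restrict {x : ℝ × (Fin n → ℝ) | 0 < (1 : ℝ) * (x.1 - a)} with hμp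
  set μm := μ.restrict {x : ℝ × (Fin n → ℝ) | 0 < (-1 : ℝ) * (x.1 - a)} with hμm
  have hmp : μp.real univ = m / 2 := by
    rw [← ha2, hμp, measureReal_def, Measure.restrict_apply_univ, measureReal_def]
    simp
  have hmm : μm.real univ = m / 2 := by
    rw [← ha1, hμm, measureReal_def, Measure.restrict_apply_univ, measureReal_def]
    simp
  have hcp : 0 < ∫ x, (x.1 - a) ∂μp := by
    have hi : Integrable (fun x : ℝ × (Fin n → ℝ) => x.1 - a) μp :=
      (i1.sub (integrable_const a)).restrict
    have hpos : ∀ᵐ x ∂μp, 0 < x.1 - a := by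
      filter_upwards [ae_restrict_mem hSp] with x hx
      simpa using hx
    rw [integral_pos_iff_support_of_nonneg_ae (hpos.mono fun x hx => hx.le) hi]
    have : μp (Function.support fun x : ℝ × (Fin n → ℝ) => x.1 - a) = μp univ := by
      apply measure_congr
      filter_upwards [hpos] with x hx
      simp only [eq_iff_iff]
      exact ⟨fun _ => trivial, fun _ => hx.ne'⟩
    rw [this]
    have : μp.real univ ≠ 0 := by rw [hmp]; positivity
    exact pos_iff_ne_zero.2 fun h0 => this (by simp [measureReal_def, h0])
  have hcm : ∫ x, (x.1 - a) ∂μm ≤ 0 := by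
    refine integral_nonpos_of_ae ?_
    filter_upwards [ae_restrict_mem hSm] with x hx
    have : 0 < (-1 : ℝ) * (x.1 - a) := hx
    simp only [Pi.zero_apply]; linarith
  set cp := ∫ x, (x.1 - a) ∂μp with hcpd
  set cm := ∫ x, (x.1 - a) ∂μm with hcmd
  let w : Fin n → ℝ := fun i => (∫ x, x.2 i ∂μp - ∫ x, x.2 i ∂μm) / (cp - cm)
  let z : Fin n → ℝ := fun i => (∫ x, x.2 i ∂μp - cp * w i) / (m / 2)
  have hintg : ∀ i, Integrable (fun x : ℝ × (Fin n → ℝ) => x.2 i - z i - (x.1 - a) * w i) μ := fun i =>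
    ((i2 i).sub (integrable_const _)).sub ((i1.sub (integrable_const a)).mul_const _)
  have hval : ∀ (S : Set (ℝ × (Fin n → ℝ))) (i : Fin n),
      ∫ x, (x.2 i - z i - (x.1 - a) * w i) ∂(μ.restrict S) =
      ∫ x, x.2 i ∂(μ.restrict S) - (μ.restrict S).real univ * z i
        - (∫ x, (x.1 - a) ∂(μ.restrict S)) * w i := by
    intro S i
    rw [integral_sub, integral_sub, integral_mul_const, integral_const, smul_eq_mul]
    · exact (i2 i).restrict
    · exact integrable_const _
    · exact ((i2 i).restrict).sub (integrable_const _)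
    · exact ((i1.sub (integrable_const a)).restrict).mul_const _
  have hw : ∀ i, (cp - cm) * w i = ∫ x, x.2 i ∂μp - ∫ x, x.2 i ∂μm := fun i => by
    simp only [w]; field_simp [(by linarith : cp - cm ≠ 0)]
  have hzz : ∀ i, m / 2 * z i = ∫ x, x.2 i ∂μp - cp * w i := fun i => by
    simp only [z]; field_simp
  have kp := half hP C f g hf hg 1 (Or.inl rfl) z w a μp rfl (measure_ne_top _ _)
    (fun i => (hintg i).restrict) (fun i => by
      rw [hμp, hval, ← hμp, hmp, ← hcpd]
      linarith [hzz i]) h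
  have km := half hP C f g hf hg (-1) (Or.inr rfl) z w a μm rfl (measure_ne_top _ _)
    (fun i => (hintg i).restrict) (fun i => by
      rw [hμm, hval, ← hμm, hmm, ← hcmd]
      linarith [hzz i, hw i]) h
  set g' : ℝ × (Fin n → ℝ) → ℝ≥0∞ :=
    fun y => g y * ENNReal.ofReal (Real.exp (a * y.1 + z ⬝ᵥ y.2)) with hg'
  -- sum up
  have hsplit : ∫⁻ y, g' y ≤ (∫⁻ y in {y | 0 < 1 * (y.1 + w ⬝ᵥ y.2)}, g' y) +
      ∫⁻ y in {y | 0 < -1 * (y.1 + w ⬝ᵥ y.2)}, g' y := by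
    have hnull := null_graph (fun y => w ⬝ᵥ y) (hdot w)
    have hU : (univ : Set (ℝ × (Fin n → ℝ))) ⊆ ({y | 0 < 1 * (y.1 + w ⬝ᵥ y.2)} ∪
        {y | 0 < -1 * (y.1 + w ⬝ᵥ y.2)}) ∪ {y | y.1 + w ⬝ᵥ y.2 = 0} := by
      intro y _
      rcases lt_trichotomy (y.1 + w ⬝ᵥ y.2) 0 with h1 | h1 | h1
      · left; right; rw [mem_ofPred_eq]; linarith
      · right; exact h1
      · left; left; rw [mem_ofPred_eq]; linarith
    rw [← setLIntegral_univ]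
    refine (lintegral_mono_set hU).trans ((lintegral_union_le _ _ _).trans ?_)
    rw [setLIntegral_measure_zero _ _ hnull, add_zero]
    exact lintegral_union_le _ _ _
  -- Jensen
  have hjen : ∫⁻ y, g y ≤ ∫⁻ y, g' y := by
    set ν := volume.withDensity g with hν
    have hνu : ν univ = ∫⁻ y, g y := by rw [hν, withDensity_apply _ MeasurableSet.univ]; simp
    have : IsFiniteMeasure ν := ⟨by rw [hνu]; exact hgfin.lt_top⟩
    have hd : Measurable fun y : ℝ × (Fin n → ℝ) => z ⬝ᵥ y.2 := (hdot z).comp measurable_snd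
    have e1 : ∫⁻ y, g' y = ∫⁻ y, ENNReal.ofReal (Real.exp (a * y.1 + z ⬝ᵥ y.2)) ∂ν := by
      rw [hν, lintegral_withDensity_eq_lintegral_mul _ hg (by fun_prop)]
      rfl
    rw [e1, ← hνu]
    by_cases htop : ∫⁻ y, ENNReal.ofReal (Real.exp (a * y.1 + z ⬝ᵥ y.2)) ∂ν = ∞
    · rw [htop]; exact le_top
    have hie : Integrable (fun y : ℝ × (Fin n → ℝ) => Real.exp (a * y.1 + z ⬝ᵥ y.2)) ν := by
      refine ⟨Measurable.aestronglyMeasurable (by fun_prop), ?_⟩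
      rw [hasFiniteIntegral_iff_ofReal (.of_forall fun y => (Real.exp_pos _).le)]
      exact lt_top_iff_ne_top.2 htop
    rw [← ofReal_integral_eq_lintegral_ofReal hie (.of_forall fun y => (Real.exp_pos _).le),
      ← ofReal_measureReal]
    refine ENNReal.ofReal_le_ofReal ?_
    have hzi : Integrable (fun y : ℝ × (Fin n → ℝ) => z ⬝ᵥ y.2) ν := by
      unfold dotProduct
      exact integrable_finsetSum _ fun i _ => (hgi2 i).const_mul _
    have hz0 : ∫ y : ℝ × (Fin n → ℝ), z ⬝ᵥ y.2 ∂ν = 0 := by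
      unfold dotProduct
      rw [integral_finsetSum _ fun i _ => (hgi2 i).const_mul _]
      simp [integral_const_mul, hg02]
    have hlin : ∫ y : ℝ × (Fin n → ℝ), ((a * y.1 + z ⬝ᵥ y.2) + 1) ∂ν = ν.real univ := by
      have hadd : Integrable (fun y : ℝ × (Fin n → ℝ) => a * y.1 + z ⬝ᵥ y.2) ν :=
        (hgi1.const_mul a).add hzi
      rw [integral_add hadd (integrable_const _),
        integral_add (hgi1.const_mul a) hzi, integral_const_mul, hg01, hz0]
      simp
    rw [← hlin]
    exact integral_mono (((hgi1.const_mul a).add hzi).add (integrable_const _)) hie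
      fun y => Real.add_one_le_exp _
  have hmpE : μp univ = μ univ / 2 := by
    rw [← ofReal_measureReal (μ := μp), hmp, ← ofReal_measureReal (μ := μ) (s := univ),
      ENNReal.ofReal_div_of_pos (by norm_num)]; simp [hm]
  have hmmE : μm univ = μ univ / 2 := by
    rw [← ofReal_measureReal (μ := μm), hmm, ← ofReal_measureReal (μ := μ) (s := univ),
      ENNReal.ofReal_div_of_pos (by norm_num)]; simp [hm]
  rw [hmpE] at kp
  rw [hmmE] at km
  rw [← hμu]
  have hpi : ENNReal.ofReal (2 * Real.pi) = 4 * ENNReal.ofReal (Real.pi / 2) := by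
    rw [show (4 : ℝ≥0∞) = ENNReal.ofReal 4 by simp, ← ENNReal.ofReal_mul (by norm_num)]
    congr 1; ring
  have h2 : μ univ = 2 * (μ univ / 2) := by
    rw [ENNReal.mul_div_cancel (by simp) (by simp)]
  calc μ univ * ∫⁻ y, g y ≤ 2 * (μ univ / 2) * ((∫⁻ y in {y | 0 < 1 * (y.1 + w ⬝ᵥ y.2)}, g' y) +
      ∫⁻ y in {y | 0 < -1 * (y.1 + w ⬝ᵥ y.2)}, g' y) := by
        rw [← h2]; gcongr; exact hjen.trans hsplit
    _ = 2 * (μ univ / 2 * (∫⁻ y in {y | 0 < 1 * (y.1 + w ⬝ᵥ y.2)}, g' y) +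
      μ univ / 2 * ∫⁻ y in {y | 0 < -1 * (y.1 + w ⬝ᵥ y.2)}, g' y) := by ring
    _ ≤ 2 * (C * ENNReal.ofReal (Real.pi / 2) * ENNReal.ofReal (2 * Real.pi) ^ n +
          C * ENNReal.ofReal (Real.pi / 2) * ENNReal.ofReal (2 * Real.pi) ^ n) := by gcongr
    _ = C * (4 * ENNReal.ofReal (Real.pi / 2)) * ENNReal.ofReal (2 * Real.pi) ^ n := by ring
    _ = _ := by rw [← hpi]; ring


theorem FSan_succ {n : ℕ} (hP : FSan n) : FSan (n + 1) := by
  intro C f g hf hg hgfin hgi hg0 h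
  let e := (MeasurableEquiv.piFinSuccAbove (fun _ : Fin (n + 1) => ℝ) 0).symm
  have he : MeasurePreserving e volume volume :=
    (volume_preserving_piFinSuccAbove (fun _ : Fin (n + 1) => ℝ) 0).symm
  have hev : ∀ p : ℝ × (Fin n → ℝ), e p = Fin.cons p.1 p.2 := by
    intro p
    simp [e, MeasurableEquiv.piFinSuccAbove, Fin.insertNthEquiv]
  have hev0 : ∀ p : ℝ × (Fin n → ℝ), e p 0 = p.1 := fun p => by rw [hev]; rfl
  have hevs : ∀ (p : ℝ × (Fin n → ℝ)) (i : Fin n), e p i.succ = p.2 i := fun p i => by rw [hev]; rfl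
  have hdens : volume.withDensity g = (volume.withDensity (g ∘ e)).map e := by
    ext A hA
    rw [Measure.map_apply e.measurable hA, withDensity_apply _ hA,
      withDensity_apply _ (e.measurable hA)]
    exact (he.setLIntegral_comp_preimage hA hg).symm
  have hi : ∀ i, Integrable (fun p => e p i) (volume.withDensity (g ∘ e)) := by
    intro i
    have := hgi i
    rw [hdens, integrable_map_measure (measurable_pi_apply i).aestronglyMeasurable
      e.measurable.aemeasurable] at this
    exact this
  have h0 : ∀ i, ∫ p, e p i ∂(volume.withDensity (g ∘ e)) = 0 := by
    intro i
    have := hg0 i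
    rw [hdens, integral_map e.measurable.aemeasurable
      (measurable_pi_apply i).aestronglyMeasurable] at this
    exact this
  have hG : ∫⁻ y, g y = ∫⁻ p, g (e p) := (he.lintegral_comp hg).symm
  rw [← he.lintegral_comp hf, hG]
  let B : ℕ → Set (ℝ × (Fin n → ℝ)) := fun N => Metric.closedBall 0 (N : ℝ)
  have hB : ∀ N, MeasurableSet (B N) := fun N => Metric.isClosed_closedBall.measurableSet
  refine trunc_le (F := fun N => (B N).indicator fun p => min (f (e p)) (N : ℝ≥0∞)) ?_ ?_ ?_ ?_
  · intro N
    exact ((hf.comp e.measurable).min measurable_const).indicator (hB N)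
  · intro M N hMN p
    have hMN' : (M : ℝ) ≤ N := by exact_mod_cast hMN
    refine (indicator_le_indicator_of_subset (Metric.closedBall_subset_closedBall hMN')
      (fun _ => zero_le) p).trans (indicator_le_indicator ?_)
    exact min_le_min le_rfl (by exact_mod_cast hMN)
  · intro p
    obtain ⟨N0, hN0⟩ := exists_nat_ge ‖p‖
    refine (le_iSup_min (f (e p))).trans (iSup_le fun N => ?_)
    refine le_iSup_of_le (max N N0) ?_
    have : p ∈ B (max N N0) := by
      simp only [B, mem_closedBall_zero_iff]
      exact hN0.trans (by exact_mod_cast le_max_right _ _)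
    rw [indicator_of_mem this]
    exact min_le_min le_rfl (by exact_mod_cast le_max_left _ _)
  · intro N
    refine step_bdd hP C _ (fun p => g (e p)) ?_ (hg.comp e.measurable) N ?_ ?_ ?_ ?_ ?_ ?_ ?_ ?_
    · exact ((hf.comp e.measurable).min measurable_const).indicator (hB N)
    · intro x
      refine indicator_le' (fun y _ => min_le_right _ _) (fun _ _ => zero_le) x
    · intro x hx
      exact indicator_of_notMem hx _
    · rwa [← hG]
    · have := hi 0; simp only [hev0] at this; exact this
    · intro i; have := hi i.succ; simp only [hevs] at this; exact this
    · have := h0 0; simp only [hev0] at this; exact this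
    · intro i; have := h0 i.succ; simp only [hevs] at this; exact this
    · intro x y
      refine le_trans (mul_le_mul' (indicator_le_self _ _ x) le_rfl) ?_
      refine le_trans (mul_le_mul' (min_le_left _ _) le_rfl) ((h _ _).trans (le_of_eq ?_))
      congr 4
      simp [dotProduct, Fin.sum_univ_succ, hev0, hevs]

theorem FSan_all (n : ℕ) : FSan n := by
  induction n with
  | zero => exact FSan_zero
  | succ n ih => exact FSan_succ ih

theorem FSan_euclid {n : ℕ} (f g : EuclideanSpace ℝ (Fin n) → ℝ≥0∞) (hf : Measurable f)
    (hg : Measurable g) (hgfin : ∫⁻ y, g y ≠ ∞)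
    (hgi : ∀ i, Integrable (fun y : EuclideanSpace ℝ (Fin n) => y i) (volume.withDensity g))
    (hg0 : ∀ i, ∫ y, y i ∂(volume.withDensity g) = 0)
    (h : ∀ x y, f x * g y ≤ ENNReal.ofReal (Real.exp (-(inner ℝ x y)))) :
    (∫⁻ x, f x) * (∫⁻ y, g y) ≤ ENNReal.ofReal (2 * Real.pi) ^ n := by
  let e := (MeasurableEquiv.toLp 2 (Fin n → ℝ))
  have he : MeasurePreserving e volume volume := PiLp.volume_preserving_toLp (Fin n)
  have hev : ∀ p i, e p i = p i := fun p i => rfl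
  have hdens : volume.withDensity g = (volume.withDensity (g ∘ e)).map e := by
    ext A hA
    rw [Measure.map_apply e.measurable hA, withDensity_apply _ hA,
      withDensity_apply _ (e.measurable hA)]
    exact (he.setLIntegral_comp_preimage hA hg).symm
  have hmi : ∀ i, Measurable fun y : EuclideanSpace ℝ (Fin n) => y i := fun i => by fun_prop
  have hG : ∫⁻ y, g y = ∫⁻ p, g (e p) := (he.lintegral_comp hg).symm
  rw [← he.lintegral_comp hf, hG]
  have := FSan_all n 1 (fun p => f (e p)) (fun p => g (e p)) (hf.comp e.measurable)
    (hg.comp e.measurable) (by rwa [← hG]) ?_ ?_ ?_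
  · simpa using this
  · intro i
    have := hgi i
    rw [hdens, integrable_map_measure (hmi i).aestronglyMeasurable
      e.measurable.aemeasurable] at this
    exact this
  · intro i
    have := hg0 i
    rw [hdens, integral_map e.measurable.aemeasurable (hmi i).aestronglyMeasurable] at this
    exact this
  · intro x y
    refine (h _ _).trans (le_of_eq ?_)
    simp only [ENNReal.coe_one, one_mul]
    congr 3
    simp [PiLp.inner_apply, dotProduct, hev, mul_comm]


theorem layer {n d : ℕ} (H : EuclideanSpace ℝ (Fin n) → ℝ) (hH : Measurable H)
    (H0 : ∀ y, 0 ≤ H y) (Hh : ∀ t : ℝ, 0 < t → ∀ y, H (t • y) = t * H y)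
    (G : EuclideanSpace ℝ (Fin n) → ℝ≥0∞) (hG : Measurable G)
    (Gh : ∀ t : ℝ, 0 < t → ∀ y, G (t • y) = ENNReal.ofReal t ^ d * G y)
    (ψ φ : ℝ → ℝ≥0∞) (hψ : Measurable ψ)
    (hφ : ∀ r, 0 ≤ r → φ r = ∫⁻ t in Ici r, ψ t) :
    ∫⁻ y, G y * φ (H y) = (∫⁻ t in Ioi 0, ψ t * ENNReal.ofReal t ^ (n + d)) *
      ∫⁻ y in {y | H y ≤ 1}, G y := by
  have hm1 : MeasurableSet {y | H y ≤ 1} := measurableSet_le hH measurable_const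
  have e1 : ∀ y, G y * φ (H y) = ∫⁻ t, (if H y ≤ t then G y * ψ t else 0) := by
    intro y
    rw [hφ _ (H0 y), ← lintegral_const_mul _ hψ, ← lintegral_indicator measurableSet_Ici]
    refine lintegral_congr fun t => ?_
    simp [indicator_apply]
  have hmeas : Measurable (Function.uncurry fun (y : EuclideanSpace ℝ (Fin n)) (t : ℝ) =>
      (if H y ≤ t then G y * ψ t else 0)) := by
    refine Measurable.ite ?_ ?_ measurable_const
    · exact measurableSet_le (hH.comp measurable_fst) measurable_snd
    · exact (hG.comp measurable_fst).mul (hψ.comp measurable_snd)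
  simp_rw [e1]
  rw [lintegral_lintegral_swap hmeas.aemeasurable, mul_comm,
    ← lintegral_const_mul _ (by fun_prop), ← lintegral_indicator measurableSet_Ioi]
  have hne : ∀ᵐ t : ℝ, t ≠ 0 := by
    simp [ae_iff]
  refine lintegral_congr_ae (hne.mono fun t ht => ?_)
  beta_reduce
  rcases lt_or_gt_of_ne ht with ht | ht
  · rw [indicator_of_notMem (by simp [ht.le])]
    refine (lintegral_congr fun y => if_neg ?_).trans lintegral_zero
    have := H0 y
    linarith
  · rw [indicator_of_mem (by exact ht)]
    let F : EuclideanSpace ℝ (Fin n) → ℝ≥0∞ := fun y => if H y ≤ t then G y * ψ t else 0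
    have hF : Measurable F := hmeas.comp (measurable_id.prodMk measurable_const)
    have h1 : ∫⁻ y, F (t • y) = ENNReal.ofReal |(t ^ n)⁻¹| * ∫⁻ y, F y := by
      rw [← lintegral_map (f := F) (g := fun y => t • y) hF (by fun_prop),
        Measure.map_addHaar_smul _ ht.ne', lintegral_smul_measure]
      simp
    have h2 : ∫⁻ y, F (t • y) = (ENNReal.ofReal t ^ d * ψ t) * ∫⁻ y in {y | H y ≤ 1}, G y := by
      rw [← lintegral_const_mul _ hG, ← lintegral_indicator hm1]
      refine lintegral_congr fun y => ?_
      simp only [F, Hh t ht, Gh t ht, indicator_apply, mem_ofPred_eq]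
      have : t * H y ≤ t ↔ H y ≤ 1 := by
        constructor <;> intro h <;> nlinarith
      simp only [this]
      split_ifs
      · ring
      · rfl
    have h3 : ENNReal.ofReal t ^ n * ENNReal.ofReal |(t ^ n)⁻¹| = 1 := by
      rw [← ENNReal.ofReal_pow ht.le, ← ENNReal.ofReal_mul (by positivity),
        abs_of_pos (by positivity), mul_inv_cancel₀ (by positivity), ENNReal.ofReal_one]
    calc ∫⁻ y, F y = (ENNReal.ofReal t ^ n * ENNReal.ofReal |(t ^ n)⁻¹|) * ∫⁻ y, F y := by
          rw [h3, one_mul]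
      _ = _ := by rw [mul_assoc, ← h1, h2, pow_add]; ring

theorem phi_exp (r : ℝ) : ENNReal.ofReal (Real.exp (-r)) =
    ∫⁻ t in Ici r, ENNReal.ofReal (Real.exp (-t)) := by
  rw [← integral_exp_neg_Ioi r, ofReal_integral_eq_lintegral_ofReal
    (integrableOn_exp_neg_Ioi r) (.of_forall fun t => (Real.exp_pos _).le)]
  exact (setLIntegral_congr Ioi_ae_eq_Ici)

theorem phi_gauss (r : ℝ) (hr : 0 ≤ r) : ENNReal.ofReal (Real.exp (-r ^ 2 / 2)) =
    ∫⁻ t in Ici r, ENNReal.ofReal (t * Real.exp (-t ^ 2 / 2)) := by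
  have hd : ∀ x ∈ Ici r, HasDerivAt (fun t : ℝ => -Real.exp (-t ^ 2 / 2))
      (x * Real.exp (-x ^ 2 / 2)) x := by
    intro x _
    have h1 : HasDerivAt (fun t : ℝ => -t ^ 2 / 2) (-x) x := by
      refine ((hasDerivAt_pow 2 x).fun_neg.div_const 2).congr_deriv ?_
      norm_num
      ring
    refine h1.exp.fun_neg.congr_deriv ?_
    ring
  have hpos : ∀ x ∈ Ioi r, 0 ≤ x * Real.exp (-x ^ 2 / 2) := fun x hx =>
    mul_nonneg (hr.trans (le_of_lt hx)) (Real.exp_pos _).le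
  have hlim : Filter.Tendsto (fun t : ℝ => -Real.exp (-t ^ 2 / 2)) Filter.atTop (nhds 0) := by
    rw [← neg_zero]
    refine (Real.tendsto_exp_atBot.comp ?_).neg
    have : (fun t : ℝ => -t ^ 2 / 2) = fun t => -(t ^ 2 / 2) := by ext; ring
    rw [this]
    exact Filter.tendsto_neg_atTop_atBot.comp
      ((Filter.tendsto_pow_atTop two_ne_zero).atTop_div_const two_pos)
  have hi := integrableOn_Ioi_deriv_of_nonneg' hd hpos hlim
  have := integral_Ioi_of_hasDerivAt_of_nonneg' hd hpos hlim
  rw [zero_sub, neg_neg] at this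
  rw [← this, ofReal_integral_eq_lintegral_ofReal hi
    (ae_restrict_of_forall_mem measurableSet_Ioi hpos)]
  exact (setLIntegral_congr Ioi_ae_eq_Ici)

theorem const_ne_zero (ψ : ℝ → ℝ≥0∞) (hψ : Measurable ψ) (h : ∀ t, 0 < t → ψ t ≠ 0) (m : ℕ) :
    ∫⁻ t in Ioi 0, ψ t * ENNReal.ofReal t ^ m ≠ 0 := by
  rw [← lintegral_indicator measurableSet_Ioi]
  intro h0
  rw [lintegral_eq_zero_iff ((by fun_prop : Measurable fun t =>
    ψ t * ENNReal.ofReal t ^ m).indicator measurableSet_Ioi)] at h0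
  have : volume (Ioi (0:ℝ)) = 0 := by
    refine measure_mono_null ?_ h0
    intro t ht
    have ht' : 0 < t := ht
    rw [mem_compl_iff, mem_ofPred_eq, indicator_of_mem ht]
    simp [h t ht', ht']
  simp at this

theorem const_exp_fin (m : ℕ) :
    ∫⁻ t in Ioi 0, ENNReal.ofReal (Real.exp (-t)) * ENNReal.ofReal t ^ m ≠ ∞ := by
  have h := Real.GammaIntegral_convergent (s := (m : ℝ) + 1) (by positivity)
  have h2 := h.lintegral_lt_top
  refine ne_of_lt (lt_of_le_of_lt (le_of_eq ?_) h2)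
  refine setLIntegral_congr_fun measurableSet_Ioi fun t ht => ?_
  have ht : 0 < t := ht
  simp only [add_sub_cancel_right, Real.rpow_natCast]
  rw [ENNReal.ofReal_mul (Real.exp_pos _).le, ENNReal.ofReal_pow ht.le]

theorem const_gauss_fin (m : ℕ) :
    ∫⁻ t in Ioi 0, ENNReal.ofReal (t * Real.exp (-t ^ 2 / 2)) * ENNReal.ofReal t ^ m ≠ ∞ := by
  have h := integrableOn_rpow_mul_exp_neg_mul_sq (b := 1 / 2) (by norm_num) (s := ((m + 1 : ℕ) : ℝ))
    (by push_cast; linarith [(Nat.cast_nonneg m : (0:ℝ) ≤ m)])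
  have h2 := h.lintegral_lt_top
  refine ne_of_lt (lt_of_le_of_lt (le_of_eq ?_) h2)
  refine setLIntegral_congr_fun measurableSet_Ioi fun t ht => ?_
  have ht : 0 < t := ht
  simp only [Real.rpow_natCast]
  rw [← ENNReal.ofReal_pow ht.le, ← ENNReal.ofReal_mul (by positivity)]
  congr 1
  rw [show -t ^ 2 / 2 = -(1 / 2) * t ^ 2 by ring]
  ring


theorem centered {n : ℕ} (h : EuclideanSpace ℝ (Fin n) → ℝ) (hm : Measurable h)
    (hh : ∀ t : ℝ, 0 < t → ∀ y, h (t • y) = t * h y) (r : ℝ) (r0 : 0 < r)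
    (hr : ∀ y, r * ‖y‖ ≤ h y)
    (hmin : ∀ w : EuclideanSpace ℝ (Fin n), ‖w‖ ≤ r / 2 →
      volume {y | h y ≤ 1} ≤ volume {y | h y - inner ℝ w y ≤ 1}) (i : Fin n) :
    Integrable (fun y : EuclideanSpace ℝ (Fin n) => y i)
      (volume.withDensity fun y => ENNReal.ofReal (Real.exp (-(h y) ^ 2 / 2))) ∧
    ∫ y, y i ∂(volume.withDensity fun y => ENNReal.ofReal (Real.exp (-(h y) ^ 2 / 2))) = 0 := by
  have hci : Continuous fun y : EuclideanSpace ℝ (Fin n) => y i := by fun_prop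
  have hmi : Measurable fun y : EuclideanSpace ℝ (Fin n) => y i := hci.measurable
  have h0 : ∀ y, 0 ≤ h y := fun y => (by positivity : 0 ≤ r * ‖y‖).trans (hr y)
  have hyi : ∀ y : EuclideanSpace ℝ (Fin n), |y i| ≤ ‖y‖ := fun y => PiLp.norm_apply_le y i
  set g1 : EuclideanSpace ℝ (Fin n) → ℝ≥0∞ := fun y => ENNReal.ofReal (Real.exp (-h y)) with hg1
  set g2 : EuclideanSpace ℝ (Fin n) → ℝ≥0∞ :=
    fun y => ENNReal.ofReal (Real.exp (-(h y) ^ 2 / 2)) with hg2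
  have mg1 : Measurable g1 := by fun_prop
  have mg2 : Measurable g2 := by fun_prop
  set μ := volume.withDensity g1 with hμ
  set X : EuclideanSpace ℝ (Fin n) → ℝ := fun y => y i with hX
  -- exponential moments
  set c := ∫⁻ t in Ioi 0, ENNReal.ofReal (Real.exp (-t)) * ENNReal.ofReal t ^ (n + 0) with hc
  have cfin : c ≠ ∞ := const_exp_fin _
  have hH0 : ∀ t : ℝ, |t| ≤ r / 2 → ∀ y, r / 2 * ‖y‖ ≤ h y - t * y i := by
    intro t ht y
    have h1 : t * y i ≤ r / 2 * ‖y‖ := (le_abs_self _).trans (by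
      rw [abs_mul]; exact mul_le_mul ht (hyi y) (abs_nonneg _) (by positivity))
    have := hr y
    linarith
  have key : ∀ t : ℝ, |t| ≤ r / 2 → ∫⁻ y, ENNReal.ofReal (Real.exp (t * X y)) ∂μ =
      c * volume {y | h y - t * y i ≤ 1} := by
    intro t ht
    rw [hμ, lintegral_withDensity_eq_lintegral_mul _ mg1 (by fun_prop)]
    have := layer (d := 0) (fun y => h y - t * y i) (by fun_prop)
      (fun y => (by positivity : 0 ≤ r / 2 * ‖y‖).trans (hH0 t ht y))
      (fun s hs y => by simp only [hh s hs, PiLp.smul_apply, smul_eq_mul]; ring)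
      (fun _ => 1) measurable_const (fun s _ y => by simp)
      (fun t => ENNReal.ofReal (Real.exp (-t))) (fun t => ENNReal.ofReal (Real.exp (-t)))
      (by fun_prop) (fun r _ => phi_exp r)
    simp only [one_mul, setLIntegral_one] at this
    rw [← this]
    refine lintegral_congr fun y => ?_
    rw [Pi.mul_apply, hg1, ← ENNReal.ofReal_mul (Real.exp_pos _).le, ← Real.exp_add]
    congr 2
    ring
  have vfin : ∀ t : ℝ, |t| ≤ r / 2 → volume {y : EuclideanSpace ℝ (Fin n) | h y - t * y i ≤ 1} ≠ ∞ := by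
    intro t ht
    refine ne_of_lt (lt_of_le_of_lt (measure_mono (t := Metric.closedBall 0 (2 / r)) ?_)
      measure_closedBall_lt_top)
    intro y hy
    rw [mem_ofPred_eq] at hy
    rw [mem_closedBall_zero_iff, le_div_iff₀ r0]
    have := hH0 t ht y
    linarith
  have hintg : ∀ t : ℝ, |t| ≤ r / 2 → Integrable (fun y => Real.exp (t * X y)) μ := by
    intro t ht
    refine ⟨by fun_prop, ?_⟩
    rw [hasFiniteIntegral_iff_ofReal (.of_forall fun y => (Real.exp_pos _).le), key t ht]
    exact ENNReal.mul_lt_top cfin.lt_top (vfin t ht).lt_top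
  have hmgf : ∀ t : ℝ, |t| ≤ r / 2 → ProbabilityTheory.mgf X μ t =
      (c * volume {y | h y - t * y i ≤ 1}).toReal := by
    intro t ht
    rw [← key t ht, ProbabilityTheory.mgf, integral_eq_lintegral_of_nonneg_ae
      (.of_forall fun y => (Real.exp_pos _).le) (by fun_prop)]
  have hnhds : Metric.closedBall (0:ℝ) (r / 2) ∈ nhds (0:ℝ) :=
    Metric.closedBall_mem_nhds _ (by positivity)
  have hmem : (0:ℝ) ∈ interior (ProbabilityTheory.integrableExpSet X μ) := by
    rw [mem_interior_iff_mem_nhds]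
    refine Filter.mem_of_superset hnhds fun t ht => hintg t ?_
    simpa using ht
  have hlm : IsLocalMin (ProbabilityTheory.mgf X μ) 0 := by
    refine Filter.mem_of_superset hnhds fun t ht => ?_
    have ht : |t| ≤ r / 2 := by simpa using ht
    have h00 : |(0:ℝ)| ≤ r / 2 := by rw [abs_zero]; positivity
    rw [mem_ofPred_eq, hmgf t ht, hmgf 0 h00]
    refine ENNReal.toReal_mono (ENNReal.mul_ne_top cfin (vfin t ht)) ?_
    refine mul_le_mul' le_rfl ?_
    have := hmin (EuclideanSpace.single i t) (by simpa using ht)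
    simpa [EuclideanSpace.inner_single_left] using this
  have hz : ∫ y, X y ∂μ = 0 := by
    have := hlm.hasDerivAt_eq_zero (ProbabilityTheory.hasDerivAt_mgf hmem)
    simpa using this
  have hXi : Integrable X μ := by
    have := ProbabilityTheory.integrable_pow_of_mem_interior_integrableExpSet hmem 1
    simpa using this
  -- transfer
  set c1 := ∫⁻ t in Ioi 0, ENNReal.ofReal (Real.exp (-t)) * ENNReal.ofReal t ^ (n + 1) with hc1
  have c1fin : c1 ≠ ∞ := const_exp_fin _
  have c1pos : c1 ≠ 0 := const_ne_zero _ (by fun_prop) (fun t _ => by simp [Real.exp_pos]) _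
  set c2 := ∫⁻ t in Ioi 0, ENNReal.ofReal (t * Real.exp (-t ^ 2 / 2)) *
    ENNReal.ofReal t ^ (n + 1) with hc2
  have c2fin : c2 ≠ ∞ := const_gauss_fin _
  have L1 : ∀ G : EuclideanSpace ℝ (Fin n) → ℝ≥0∞, Measurable G →
      (∀ t : ℝ, 0 < t → ∀ y, G (t • y) = ENNReal.ofReal t ^ 1 * G y) →
      ∫⁻ y, G y ∂μ = c1 * ∫⁻ y in {y | h y ≤ 1}, G y := by
    intro G mG hG
    rw [hμ, lintegral_withDensity_eq_lintegral_mul _ mg1 mG, hc1,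
      ← layer h hm h0 hh G mG hG _ (fun t => ENNReal.ofReal (Real.exp (-t)))
      (by fun_prop) (fun r _ => phi_exp r)]
    exact lintegral_congr fun y => mul_comm _ _
  have L2 : ∀ G : EuclideanSpace ℝ (Fin n) → ℝ≥0∞, Measurable G →
      (∀ t : ℝ, 0 < t → ∀ y, G (t • y) = ENNReal.ofReal t ^ 1 * G y) →
      ∫⁻ y, G y ∂(volume.withDensity g2) = c2 * ∫⁻ y in {y | h y ≤ 1}, G y := by
    intro G mG hG
    rw [lintegral_withDensity_eq_lintegral_mul _ mg2 mG, hc2,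
      ← layer h hm h0 hh G mG hG _ (fun t => ENNReal.ofReal (Real.exp (-t ^ 2 / 2)))
      (by fun_prop) (fun r hr => phi_gauss r hr)]
    exact lintegral_congr fun y => mul_comm _ _
  have hGp : ∀ t : ℝ, 0 < t → ∀ y, ENNReal.ofReal (X (t • y)) =
      ENNReal.ofReal t ^ 1 * ENNReal.ofReal (X y) := by
    intro t ht y
    rw [pow_one, ← ENNReal.ofReal_mul ht.le]; rfl
  have hGn : ∀ t : ℝ, 0 < t → ∀ y, ENNReal.ofReal (-X (t • y)) =
      ENNReal.ofReal t ^ 1 * ENNReal.ofReal (-X y) := by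
    intro t ht y
    rw [pow_one, ← ENNReal.ofReal_mul ht.le, mul_neg]; rfl
  have P1 := L1 (fun y => ENNReal.ofReal (X y)) (by fun_prop) hGp
  have N1 := L1 (fun y => ENNReal.ofReal (-X y)) (by fun_prop) hGn
  have P2 := L2 (fun y => ENNReal.ofReal (X y)) (by fun_prop) hGp
  have N2 := L2 (fun y => ENNReal.ofReal (-X y)) (by fun_prop) hGn
  have Pf : ∫⁻ y, ENNReal.ofReal (X y) ∂μ ≠ ∞ := hXi.lintegral_lt_top.ne
  have Nf : ∫⁻ y, ENNReal.ofReal (-X y) ∂μ ≠ ∞ := hXi.neg.lintegral_lt_top.ne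
  have hPN : ∫⁻ y, ENNReal.ofReal (X y) ∂μ = ∫⁻ y, ENNReal.ofReal (-X y) ∂μ := by
    rw [integral_eq_lintegral_pos_part_sub_lintegral_neg_part hXi, sub_eq_zero] at hz
    exact (ENNReal.toReal_eq_toReal_iff' Pf Nf).1 hz
  have hS : ∫⁻ y in {y | h y ≤ 1}, ENNReal.ofReal (X y) =
      ∫⁻ y in {y | h y ≤ 1}, ENNReal.ofReal (-X y) := by
    rw [P1, N1] at hPN
    exact (ENNReal.mul_right_inj c1pos c1fin).1 hPN
  have hSf : ∫⁻ y in {y | h y ≤ 1}, ENNReal.ofReal (X y) ≠ ∞ := by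
    intro hinf
    rw [P1, hinf, ENNReal.mul_top c1pos] at Pf
    exact Pf rfl
  have hI : Integrable X (volume.withDensity g2) := by
    refine ⟨by fun_prop, ?_⟩
    have : ∀ y, ‖X y‖ₑ = ENNReal.ofReal (X y) + ENNReal.ofReal (-X y) := by
      intro y
      rw [← ofReal_norm, Real.norm_eq_abs]
      rcases le_total 0 (X y) with hx | hx
      · rw [abs_of_nonneg hx, ENNReal.ofReal_of_nonpos (p := -X y) (by linarith), add_zero]
      · rw [abs_of_nonpos hx, ENNReal.ofReal_of_nonpos (p := X y) hx, zero_add]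
    rw [HasFiniteIntegral]
    simp_rw [this]
    rw [lintegral_add_left (by fun_prop), P2, N2, ← hS]
    exact ENNReal.add_lt_top.2 ⟨ENNReal.mul_lt_top c2fin.lt_top hSf.lt_top,
      ENNReal.mul_lt_top c2fin.lt_top hSf.lt_top⟩
  refine ⟨hI, ?_⟩
  rw [integral_eq_lintegral_pos_part_sub_lintegral_neg_part hI, P2, N2, hS, sub_self]

theorem gauss_total (n : ℕ) :
    ((∫⁻ t in Ioi 0, ENNReal.ofReal (t * Real.exp (-t ^ 2 / 2)) * ENNReal.ofReal t ^ (n + 0)) *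
      volume (Metric.closedBall (0 : EuclideanSpace ℝ (Fin n)) 1)) ^ 2 =
      ENNReal.ofReal (2 * Real.pi) ^ n := by
  have := layer (n := n) (d := 0) (fun y => ‖y‖) (by fun_prop)
      (fun y => norm_nonneg y)
      (fun s hs y => by rw [norm_smul, Real.norm_of_nonneg hs.le])
      (fun _ => 1) measurable_const (fun s _ y => by simp)
      (fun t => ENNReal.ofReal (t * Real.exp (-t ^ 2 / 2)))
      (fun t => ENNReal.ofReal (Real.exp (-t ^ 2 / 2)))
      (by fun_prop) (fun r hr => phi_gauss r hr)
  simp only [one_mul, setLIntegral_one] at this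
  have hb : {y : EuclideanSpace ℝ (Fin n) | ‖y‖ ≤ 1} = Metric.closedBall 0 1 := by
    ext y; simp
  rw [hb] at this
  rw [← this]
  have hg := GaussianFourier.integral_rexp_neg_mul_sq_norm (V := EuclideanSpace ℝ (Fin n))
    (b := 1 / 2) (by norm_num)
  have e1 : ∀ y : EuclideanSpace ℝ (Fin n), -‖y‖ ^ 2 / 2 = -(1 / 2) * ‖y‖ ^ 2 := fun y => by ring
  simp_rw [e1]
  have hpi := Real.pi_pos
  have hne : ∫ v : EuclideanSpace ℝ (Fin n), Real.exp (-(1 / 2) * ‖v‖ ^ 2) ≠ 0 := by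
    rw [hg]; positivity
  have hintg : Integrable fun v : EuclideanSpace ℝ (Fin n) => Real.exp (-(1 / 2) * ‖v‖ ^ 2) := by
    by_contra hc
    exact hne (integral_undef hc)
  rw [← ofReal_integral_eq_lintegral_ofReal hintg (.of_forall fun y => (Real.exp_pos _).le), hg,
    ← ENNReal.ofReal_pow (by positivity), ← ENNReal.ofReal_pow (by positivity)]
  congr 1
  rw [← Real.rpow_natCast, ← Real.rpow_mul (by positivity), ← Real.rpow_natCast]
  congr 1
  · ring
  · simp


theorem santalo_body {n : ℕ} (L : Set (EuclideanSpace ℝ (Fin n))) (hLc : IsCompact L)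
    (hLconv : Convex ℝ L) (hL0 : (0 : EuclideanSpace ℝ (Fin n)) ∈ interior L)
    (hs : ∀ w ∈ interior L, volume {y : EuclideanSpace ℝ (Fin n) | ∀ x ∈ L, inner ℝ y x ≤ 1} ≤
      volume {y : EuclideanSpace ℝ (Fin n) | ∀ x ∈ L, inner ℝ y (x - w) ≤ 1}) :
    volume L * volume {y : EuclideanSpace ℝ (Fin n) | ∀ x ∈ L, inner ℝ y x ≤ 1} ≤
      (volume (Metric.closedBall (0 : EuclideanSpace ℝ (Fin n)) 1)) ^ 2 := by
  have hLn : L ∈ nhds (0 : EuclideanSpace ℝ (Fin n)) := mem_interior_iff_mem_nhds.1 hL0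
  have h0L : (0 : EuclideanSpace ℝ (Fin n)) ∈ L := mem_of_mem_nhds hLn
  let h : EuclideanSpace ℝ (Fin n) → ℝ := fun y => sSup ((fun x => inner ℝ y x) '' L)
  have h_le : ∀ y c, h y ≤ c ↔ ∀ x ∈ L, inner ℝ y x ≤ c := by
    intro y c
    have hbdd : BddAbove ((fun x => (inner ℝ y x : ℝ)) '' L) := (hLc.image (by fun_prop)).bddAbove
    have hne : ((fun x => (inner ℝ y x : ℝ)) '' L).Nonempty := ⟨_, 0, h0L, rfl⟩
    refine (csSup_le_iff hbdd hne).trans ?_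
    simp
  have le_h : ∀ y, ∀ x ∈ L, inner ℝ y x ≤ h y := fun y => (h_le y _).1 le_rfl
  have hm : Measurable h := by
    refine measurable_of_Iic fun c => ?_
    have : h ⁻¹' Iic c = ⋂ x ∈ L, {y | inner ℝ y x ≤ c} := by
      ext y; simp [h_le]
    rw [this]
    exact (isClosed_biInter fun x _ => isClosed_le (by fun_prop) continuous_const).measurableSet
  have hh : ∀ t : ℝ, 0 < t → ∀ y, h (t • y) = t * h y := by
    intro t ht y
    refine le_antisymm ((h_le _ _).2 fun x hx => ?_) ?_
    · rw [real_inner_smul_left]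
      exact mul_le_mul_of_nonneg_left (le_h y x hx) ht.le
    · rw [← le_div_iff₀' ht]
      refine (h_le _ _).2 fun x hx => ?_
      rw [le_div_iff₀' ht, ← real_inner_smul_left]
      exact le_h _ x hx
  obtain ⟨r, r0, hrL⟩ := Metric.nhds_basis_closedBall.mem_iff.1 hLn
  have hr : ∀ y, r * ‖y‖ ≤ h y := by
    intro y
    rcases eq_or_ne y 0 with rfl | hy
    · simpa using le_h 0 0 h0L
    · have hy' : 0 < ‖y‖ := norm_pos_iff.2 hy
      have hx : (r / ‖y‖) • y ∈ L := hrL (by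
        rw [mem_closedBall_zero_iff, norm_smul, Real.norm_of_nonneg (by positivity)]
        exact le_of_eq (by field_simp))
      refine le_trans (le_of_eq ?_) (le_h y _ hx)
      rw [real_inner_smul_right, real_inner_self_eq_norm_sq]
      field_simp
  have h0 : ∀ y, 0 ≤ h y := fun y => (by positivity : 0 ≤ r * ‖y‖).trans (hr y)
  have hpol : {y : EuclideanSpace ℝ (Fin n) | ∀ x ∈ L, inner ℝ y x ≤ 1} = {y | h y ≤ 1} := by
    ext y; exact (h_le y 1).symm
  rw [hpol] at hs ⊢
  have hmin : ∀ w : EuclideanSpace ℝ (Fin n), ‖w‖ ≤ r / 2 →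
      volume {y | h y ≤ 1} ≤ volume {y | h y - inner ℝ w y ≤ 1} := by
    intro w hw
    have hwi : w ∈ interior L := interior_maximal (Metric.ball_subset_closedBall.trans hrL)
      Metric.isOpen_ball (by rw [mem_ball_zero_iff]; linarith)
    refine (hs w hwi).trans (le_of_eq ?_)
    congr 1
    ext y
    rw [mem_ofPred_eq, mem_ofPred_eq, sub_le_iff_le_add, h_le]
    refine forall₂_congr fun x _ => ?_
    rw [inner_sub_right, sub_le_iff_le_add, real_inner_comm w y]
  have hcen := centered h hm hh r r0 hr hmin
  set c := ∫⁻ t in Ioi 0, ENNReal.ofReal (t * Real.exp (-t ^ 2 / 2)) *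
    ENNReal.ofReal t ^ (n + 0) with hc
  have cfin : c ≠ ∞ := const_gauss_fin _
  have cpos : c ≠ 0 := const_ne_zero _ (by fun_prop) (fun t ht => by
    have := Real.exp_pos (-t ^ 2 / 2)
    simp only [ne_eq, ENNReal.ofReal_eq_zero, not_le]; positivity) _
  have lay : ∀ H : EuclideanSpace ℝ (Fin n) → ℝ, Measurable H → (∀ y, 0 ≤ H y) →
      (∀ t : ℝ, 0 < t → ∀ y, H (t • y) = t * H y) →
      ∫⁻ y, ENNReal.ofReal (Real.exp (-(H y) ^ 2 / 2)) = c * volume {y | H y ≤ 1} := by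
    intro H mH H0 Hh
    have := layer (n := n) (d := 0) H mH H0 Hh
      (fun _ => 1) measurable_const (fun s _ y => by simp)
      (fun t => ENNReal.ofReal (t * Real.exp (-t ^ 2 / 2)))
      (fun t => ENNReal.ofReal (Real.exp (-t ^ 2 / 2)))
      (by fun_prop) (fun r hr => phi_gauss r hr)
    simpa only [one_mul, setLIntegral_one] using this
  have hgm : Measurable (gauge L) := (continuous_gauge hLconv hLn).measurable
  have hgL : {x | gauge L x ≤ 1} = L := by
    ext x
    rw [mem_ofPred_eq, gauge_le_one_iff_mem_closure hLconv hLn, hLc.isClosed.closure_eq]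
  have hA := lay (gauge L) hgm (fun y => gauge_nonneg y)
    (fun t ht y => by rw [gauge_smul_of_nonneg ht.le, smul_eq_mul])
  have hB := lay h hm h0 hh
  rw [hgL] at hA
  have hdual : ∀ x y, inner ℝ x y ≤ gauge L x * h y := by
    intro x y
    have habs : Absorbent ℝ L := absorbent_nhds_zero hLn
    have key : ∀ a, gauge L x < a → inner ℝ x y ≤ a * h y := by
      intro a ha
      obtain ⟨b, hb, hba, x', hx', rfl⟩ := exists_lt_of_gauge_lt habs ha
      simp only [real_inner_smul_left]
      rw [real_inner_comm]
      exact (mul_le_mul_of_nonneg_left (le_h y x' hx') hb.le).trans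
        (mul_le_mul_of_nonneg_right hba.le (h0 y))
    have hcont : Filter.Tendsto (fun a => a * h y) (nhdsWithin (gauge L x) (Ioi (gauge L x)))
        (nhds (gauge L x * h y)) :=
      ((continuous_id.mul continuous_const).tendsto _).mono_left nhdsWithin_le_nhds
    exact ge_of_tendsto hcont (Filter.mem_of_superset self_mem_nhdsWithin key)
  have hvfin : volume {y | h y ≤ 1} ≠ ∞ := by
    refine ne_of_lt (lt_of_le_of_lt (measure_mono (t := Metric.closedBall 0 (1 / r)) ?_)
      measure_closedBall_lt_top)
    intro y hy
    rw [mem_ofPred_eq] at hy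
    rw [mem_closedBall_zero_iff, le_div_iff₀ r0]
    have := hr y
    linarith
  have main := FSan_euclid (fun x => ENNReal.ofReal (Real.exp (-(gauge L x) ^ 2 / 2)))
    (fun y => ENNReal.ofReal (Real.exp (-(h y) ^ 2 / 2))) (by fun_prop) (by fun_prop)
    (by rw [hB]; exact ENNReal.mul_ne_top cfin hvfin)
    (fun i => (hcen i).1) (fun i => (hcen i).2) (by
      intro x y
      rw [← ENNReal.ofReal_mul (Real.exp_pos _).le, ← Real.exp_add]
      refine ENNReal.ofReal_le_ofReal (Real.exp_le_exp.2 ?_)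
      have := hdual x y
      nlinarith [sq_nonneg (gauge L x - h y)])
  rw [hA, hB, ← gauss_total n, ← hc] at main
  have h2 : c ^ 2 * (volume L * volume {y | h y ≤ 1}) ≤
      c ^ 2 * volume (Metric.closedBall (0 : EuclideanSpace ℝ (Fin n)) 1) ^ 2 := by
    calc _ = c * volume L * (c * volume {y | h y ≤ 1}) := by ring
      _ ≤ _ := main
      _ = _ := by ring
  exact (ENNReal.mul_le_mul_iff_right (pow_ne_zero 2 cpos) (ENNReal.pow_ne_top cfin)).1 h2


end Helpers

/-- **Blaschke–Santaló inequality.** If `K` is a convex body in `ℝⁿ`, `n ≥ 2`, and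
`z` is the Santaló point of `K` (the point of `int K` minimizing the volume of the
polar), then `|K|·|K^z| ≤ κ_n²` where `κ_n` is the volume of the unit ball. -/
theorem blaschke_santalo {n : ℕ} (hn : 2 ≤ n)
    (K : Set (EuclideanSpace ℝ (Fin n)))
    (hKcomp : IsCompact K) (hKconv : Convex ℝ K) (hKint : (interior K).Nonempty)
    (z : EuclideanSpace ℝ (Fin n)) (hz : z ∈ interior K)
    (hsantalo : ∀ w ∈ interior K, volume (polarBody K z) ≤ volume (polarBody K w)) :
    volume K * volume (polarBody K z) ≤
      (volume (Metric.closedBall (0 : EuclideanSpace ℝ (Fin n)) 1)) ^ 2 := by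
  let e := Homeomorph.addRight z
  have hintg : ∀ w, w ∈ interior (e ⁻¹' K) ↔ w + z ∈ interior K := by
    intro w
    rw [← e.preimage_interior]; rfl
  have hvol : ∀ A : Set (EuclideanSpace ℝ (Fin n)), ∀ v, volume ((fun x => x + v) ⁻¹' A) = volume A :=
    fun A v => measure_preimage_add_right _ _ _
  have hmem : ∀ x, x ∈ e ⁻¹' K ↔ x + z ∈ K := fun x => Iff.rfl
  have hpol : ∀ w, volume {y : EuclideanSpace ℝ (Fin n) | ∀ x ∈ e ⁻¹' K, inner ℝ y (x - w) ≤ 1} =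
      volume (polarBody K (w + z)) := by
    intro w
    rw [← hvol (polarBody K (w + z)) (w + z)]
    congr 1
    ext y
    simp only [polarBody, Set.mem_preimage, Set.mem_ofPred_eq, add_sub_cancel_right]
    constructor
    · intro H x hx
      have := H (x - z) ((hmem _).2 (by rwa [sub_add_cancel]))
      rwa [sub_sub, add_comm z w] at this
    · intro H x hx
      have := H (x + z) hx
      rwa [add_sub_add_right_eq_sub] at this
  have hpol0 : volume {y : EuclideanSpace ℝ (Fin n) | ∀ x ∈ e ⁻¹' K, inner ℝ y x ≤ 1} =
      volume (polarBody K z) := by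
    have := hpol 0
    simpa only [sub_zero, zero_add] using this
  have main := santalo_body (e ⁻¹' K) (e.isCompact_preimage.2 hKcomp)
    (hKconv.translate_preimage_left z) ((hintg 0).2 (by rwa [zero_add])) (by
      intro w hw
      rw [hpol0, hpol w]
      exact hsantalo _ ((hintg w).1 hw))
  rw [hpol0] at main
  have hv : volume (e ⁻¹' K) = volume K := hvol K z
  rwa [hv] at main
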